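/- Fix integers N ≥ 2 and μ ≥ 1. Let P, R : [0,∞) → probability measures on ℕ^N be two solutions of the poor-biased master equation with initial conditions P_0 = δ_S and R_0 = δ_R the Dirac masses at two configurations S, R ∈ 𝒜_{N,μ}. Then for every t ≥ 0, W₁(P_t, R_t) ≤ 2·μ·e^{−t}, where W₁ is the normalized Wasserstein-1 distance on ℕ^N. -/

import Mathlib

open MeasureTheory ENNReal

noncomputable section

/-- The configuration obtained from `S` by adding a dollar to agent `i` and removing
one from agent `j`, i.e. `S + e_i - e_j`. -/
def moveDollar {N : ℕ} (S : Fin N → ℕ) (i j : Fin N) : Fin N → ℕ :=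
  Function.update (Function.update S i (S i + 1)) j (S j - 1)

/-- The right-hand side of the poor-biased master equation at configuration `S`:
`∑_{i ≠ j} [((S_i+1)/N) P(S + e_i - e_j) 1_{S_j ≥ 1} - (S_i/N) P(S)]`. -/
def masterRHS {N : ℕ} (P : Measure (Fin N → ℕ)) (S : Fin N → ℕ) : ℝ :=
  ∑ i : Fin N, ∑ j : Fin N,
    if i ≠ j then
      (((S i : ℝ) + 1) / N) * (P {moveDollar S i j}).toReal * (if 1 ≤ S j then 1 else 0)
        - ((S i : ℝ) / N) * (P {S}).toReal
    else 0

/-- A solution of the poor-biased master equation on `[0, ∞)`: a family of probability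
measures on `ℕ^N` whose point masses are differentiable in time with derivative given
by the master equation. -/
def IsMasterSolution {N : ℕ} (P : ℝ → Measure (Fin N → ℕ)) : Prop :=
  (∀ t ∈ Set.Ici (0 : ℝ), IsProbabilityMeasure (P t)) ∧
    ∀ S : Fin N → ℕ, ∀ t ∈ Set.Ici (0 : ℝ),
      HasDerivWithinAt (fun s => ((P s) {S}).toReal) (masterRHS (P t) S) (Set.Ici 0) t

/-- The normalized Wasserstein-1 distance (valued in `ℝ≥0∞`) between two measures on
`ℕ^d`: the infimum over couplings of the expected normalized `ℓ¹` distance. -/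
def W1 (d : ℕ) (π₁ π₂ : Measure (Fin d → ℕ)) : ℝ≥0∞ :=
  ⨅ (π : Measure ((Fin d → ℕ) × (Fin d → ℕ))) (_ : π.map Prod.fst = π₁)
      (_ : π.map Prod.snd = π₂),
    ∫⁻ z, (∑ j : Fin d, (Nat.dist (z.1 j) (z.2 j) : ℝ≥0∞)) / (d : ℝ≥0∞) ∂π

/-!
Give every dollar a label. In the labelled system each dollar has an independent exponential clock
of rate one and sits, once its clock has rung, at an independent uniformly chosen agent. The law of
the resulting configuration solves the master equation. Since total wealth is conserved and only
finitely many configurations have a given total, the master equation is a family of decoupled linear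
systems of ordinary differential equations, so its solutions are determined by their initial value.

To compare two solutions, let both labelled systems use the same clocks and the same targets, with
labels chosen so that as many dollars as possible start at the same agent. A dollar has different
owners in the two systems only if it had so initially and its clock has not rung, which has
probability `exp (-t)`, and it then contributes at most two to the `ℓ¹` distance.
-/

section Configurations

variable {N : ℕ} {S T : Fin N → ℕ} {i j : Fin N}

theorem moveDollar_eq_iff (hij : i ≠ j) (hj : 1 ≤ S j) :
    moveDollar S i j = T ↔ S + Pi.single i 1 = T + Pi.single j 1 := by
  simp only [funext_iff, moveDollar, Function.update_apply, Pi.add_apply, Pi.single_apply]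
  refine forall_congr' fun l => ?_
  split_ifs <;> grind

theorem sum_moveDollar (hij : i ≠ j) (hj : 1 ≤ S j) : ∑ l, moveDollar S i j l = ∑ l, S l := by
  have h := congrArg (fun U => ∑ l, U l) ((moveDollar_eq_iff hij hj).1 rfl)
  simpa [Finset.sum_add_distrib] using h.symm

end Configurations

section ForwardGenerator

variable {N : ℕ}

/-- The right-hand side of the master equation as a linear operator on functions of the
configuration; `masterRHS P` is its value at the point masses of `P`. -/
def forwardGenerator (N : ℕ) : ((Fin N → ℕ) → ℝ) →ₗ[ℝ] (Fin N → ℕ) → ℝ where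
  toFun v S := ∑ i, ∑ j,
    if i ≠ j then
      ((S i + 1 : ℝ) / N) * v (moveDollar S i j) * (if 1 ≤ S j then 1 else 0) - (S i / N : ℝ) * v S
    else 0
  map_add' v w := by
    ext S
    simp only [Pi.add_apply, ← Finset.sum_add_distrib]
    refine Finset.sum_congr rfl fun i _ => Finset.sum_congr rfl fun j _ => ?_
    split_ifs <;> ring
  map_smul' c v := by
    ext S
    simp only [Pi.smul_apply, smul_eq_mul, RingHom.id_apply, Finset.mul_sum]
    refine Finset.sum_congr rfl fun i _ => Finset.sum_congr rfl fun j _ => ?_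
    split_ifs <;> ring

theorem forwardGenerator_apply (v : (Fin N → ℕ) → ℝ) (S : Fin N → ℕ) :
    forwardGenerator N v S = ∑ i, ∑ j,
      if i ≠ j then
        ((S i + 1 : ℝ) / N) * v (moveDollar S i j) * (if 1 ≤ S j then 1 else 0)
          - (S i / N : ℝ) * v S
      else 0 :=
  rfl

theorem masterRHS_eq_forwardGenerator (P : Measure (Fin N → ℕ)) :
    masterRHS P = forwardGenerator N fun S => P.real {S} :=
  rfl

theorem forwardGenerator_congr {v w : (Fin N → ℕ) → ℝ} {S : Fin N → ℕ}
    (h : ∀ T, ∑ i, T i = ∑ i, S i → v T = w T) :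
    forwardGenerator N v S = forwardGenerator N w S := by
  simp only [forwardGenerator_apply]
  refine Finset.sum_congr rfl fun i _ => Finset.sum_congr rfl fun j _ => ?_
  split_ifs with hij hj
  · rw [h S rfl, h _ (sum_moveDollar hij hj)]
  · rw [h S rfl, mul_zero, mul_zero]
  · rfl

theorem mul_ite_eq_moveDollar {s T : Fin N → ℕ} {i j : Fin N} (hij : i ≠ j) :
    (s i : ℝ) * (if T = moveDollar s j i then 1 else 0) =
      (T i + 1) * (if moveDollar T i j = s then 1 else 0) * (if 1 ≤ T j then 1 else 0) := by
  by_cases h : s + Pi.single j 1 = T + Pi.single i 1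
  · have hi : s i = T i + 1 := by simpa [hij] using congrFun h i
    have hj : T j = s j + 1 := by simpa [hij.symm] using (congrFun h j).symm
    rw [if_pos ((moveDollar_eq_iff hij.symm (by omega)).2 h).symm,
      if_pos ((moveDollar_eq_iff hij (by omega)).2 h.symm), if_pos (by omega), hi]
    push_cast
    ring
  · have hleft : (s i : ℝ) * (if T = moveDollar s j i then 1 else 0) = 0 := by
      rcases Nat.eq_zero_or_pos (s i) with hi | hi
      · simp [hi]
      · rw [if_neg fun e => h ((moveDollar_eq_iff hij.symm hi).1 e.symm), mul_zero]
    have hright (hj : 1 ≤ T j) : moveDollar T i j ≠ s := fun e =>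
      h ((moveDollar_eq_iff hij hj).1 e).symm
    rw [hleft]
    split_ifs with h₁ h₂ <;> simp_all

theorem forwardGenerator_single (s : Fin N → ℕ) :
    forwardGenerator N (Pi.single s 1) = ∑ i, s i • ∑ j,
      if i ≠ j then (1 / N : ℝ) • (Pi.single (moveDollar s j i) 1 - Pi.single s 1) else 0 := by
  ext T
  have hT (i : Fin N) : (T i : ℝ) * (if T = s then 1 else 0) = s i * (if T = s then 1 else 0) := by
    split_ifs with h
    · rw [h]
    · simp only [mul_zero]
  simp only [forwardGenerator_apply, Finset.sum_apply, Pi.smul_apply, Finset.smul_sum]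
  refine Finset.sum_congr rfl fun i _ => Finset.sum_congr rfl fun j _ => ?_
  by_cases hij : i = j
  · simp [hij]
  · simp only [ne_eq, hij, not_false_eq_true, if_true, Pi.smul_apply, Pi.sub_apply,
      Pi.single_apply, nsmul_eq_mul, smul_eq_mul]
    linear_combination (-1 / N : ℝ) * mul_ite_eq_moveDollar (s := s) (T := T) hij
      - (1 / N : ℝ) * hT i

end ForwardGenerator

section Uniqueness

variable {N : ℕ}

/-- The forward generator on the finitely many configurations of total wealth `M`. -/
def levelGenerator (N M : ℕ) :
    (Finset.piAntidiag (Finset.univ : Finset (Fin N)) M → ℝ) →ₗ[ℝ]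
      Finset.piAntidiag (Finset.univ : Finset (Fin N)) M → ℝ :=
  LinearMap.funLeft ℝ ℝ Subtype.val ∘ₗ forwardGenerator N ∘ₗ
    Function.ExtendByZero.linearMap ℝ Subtype.val

theorem levelGenerator_restrict {M : ℕ} (v : (Fin N → ℕ) → ℝ) :
    levelGenerator N M (fun S => v S.1) = fun S => forwardGenerator N v S.1 := by
  ext S
  refine forwardGenerator_congr fun T hT => ?_
  have hS : ∑ i, (S : Fin N → ℕ) i = M := (Finset.mem_piAntidiag.1 S.2).1
  exact Subtype.val_injective.extend_apply (fun S => v S.1) 0 ⟨T, by simp [hT, hS]⟩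

theorem forwardEquation_unique {f g : ℝ → (Fin N → ℕ) → ℝ}
    (hf : ∀ S, ∀ t ∈ Set.Ici (0 : ℝ),
      HasDerivWithinAt (f · S) (forwardGenerator N (f t) S) (Set.Ici 0) t)
    (hg : ∀ S, ∀ t ∈ Set.Ici (0 : ℝ),
      HasDerivWithinAt (g · S) (forwardGenerator N (g t) S) (Set.Ici 0) t)
    (h0 : f 0 = g 0) {t : ℝ} (ht : 0 ≤ t) : f t = g t := by
  ext S
  let L := Finset.piAntidiag (Finset.univ : Finset (Fin N)) (∑ i, S i)
  let A : (L → ℝ) →L[ℝ] L → ℝ := LinearMap.toContinuousLinearMap (levelGenerator N (∑ i, S i))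
  have restrict_solves {u : ℝ → (Fin N → ℕ) → ℝ}
      (hu : ∀ S, ∀ t ∈ Set.Ici (0 : ℝ),
        HasDerivWithinAt (u · S) (forwardGenerator N (u t) S) (Set.Ici 0) t)
      (s : ℝ) (hs : 0 ≤ s) :
      HasDerivWithinAt (fun s (T : L) => u s T) (A fun T => u s T) (Set.Ici 0) s := by
    refine hasDerivWithinAt_pi.2 fun T => ?_
    rw [show A (fun T => u s T) = _ from levelGenerator_restrict (u s)]
    exact hu T s hs
  have h := ODE_solution_unique (a := 0) (b := t) (v := fun _ => A) (fun _ => A.lipschitz)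
    (fun s hs => (restrict_solves hf s hs.1).continuousWithinAt.mono Set.Icc_subset_Ici_self)
    (fun s hs => (restrict_solves hf s hs.1).mono (Set.Ici_subset_Ici.2 hs.1))
    (fun s hs => (restrict_solves hg s hs.1).continuousWithinAt.mono Set.Icc_subset_Ici_self)
    (fun s hs => (restrict_solves hg s hs.1).mono (Set.Ici_subset_Ici.2 hs.1))
    (by rw [h0])
  exact congrFun (h ⟨ht, le_rfl⟩) ⟨S, Finset.mem_piAntidiag.2 ⟨rfl, by simp⟩⟩

theorem IsMasterSolution.eq_of_zero_eq {P Q : ℝ → Measure (Fin N → ℕ)}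
    (hP : IsMasterSolution P) (hQ : IsMasterSolution Q) (h0 : P 0 = Q 0) {t : ℝ} (ht : 0 ≤ t) :
    P t = Q t := by
  have := hP.1 t ht
  have := hQ.1 t ht
  have h := forwardEquation_unique (f := fun s S => (P s).real {S}) (g := fun s S => (Q s).real {S})
    hP.2 hQ.2 (funext fun S => by rw [h0]) ht
  exact Measure.ext_of_measureReal_singleton (congrFun h)

end Uniqueness

section Occupation

variable {ι κ : Type*} [Fintype ι] [DecidableEq κ]

/-- The configuration of a labelled system: `x k` is the agent owning the dollar `k`, and
`occupation x i` is the wealth of agent `i`. -/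
def occupation (x : ι → κ) (i : κ) : ℕ :=
  Finset.card {k | x k = i}

theorem sum_comp_eq_sum_occupation_smul [Fintype κ] {E : Type*} [AddCommMonoid E] (x : ι → κ)
    (f : κ → E) : ∑ k, f (x k) = ∑ i, occupation x i • f i := by
  rw [← Finset.sum_fiberwise Finset.univ x]
  refine Finset.sum_congr rfl fun i _ => ?_
  rw [Finset.sum_congr rfl fun k hk => by rw [(Finset.mem_filter.1 hk).2], Finset.sum_const]
  rfl

theorem occupation_sumElim {ι' : Type*} [Fintype ι'] (x : ι → κ) (y : ι' → κ) :
    occupation (Sum.elim x y) = occupation x + occupation y := by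
  ext i
  simp only [occupation, Finset.card_filter, Fintype.sum_sum_type, Sum.elim_inl, Sum.elim_inr,
    Pi.add_apply]
  rfl

theorem exists_occupation_eq [Fintype κ] (S : κ → ℕ) (hS : Fintype.card ι = ∑ i, S i) :
    ∃ x : ι → κ, occupation x = S := by
  let e : ι ≃ Σ i, Fin (S i) := Fintype.equivOfCardEq (by simp [hS])
  refine ⟨fun k => (e k).1, funext fun i => ?_⟩
  simp only [occupation, Finset.card_filter]
  rw [e.sum_comp fun p => if p.1 = i then 1 else 0, Fintype.sum_sigma, Finset.sum_eq_single i]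
  · simp
  · simp +contextual
  · simp

theorem sum_dist_occupation_le [Fintype κ] (x y : ι → κ) :
    ∑ i, Nat.dist (occupation x i) (occupation y i) ≤ 2 * Finset.card {k | x k ≠ y k} := by
  have hdist (i : κ) : Nat.dist (occupation x i) (occupation y i) ≤
      Finset.card {k ∈ {k | x k ≠ y k} | x k = i} +
        Finset.card {k ∈ {k | x k ≠ y k} | y k = i} := by
    refine add_le_add ?_ ?_ <;>
    · classical
      refine (Finset.le_card_sdiff _ _).trans (Finset.card_le_card fun k => ?_)
      simp only [Finset.mem_sdiff, Finset.mem_filter, Finset.mem_univ, true_and]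
      grind
  calc ∑ i, Nat.dist (occupation x i) (occupation y i)
      ≤ ∑ i, (Finset.card {k ∈ {k | x k ≠ y k} | x k = i} +
          Finset.card {k ∈ {k | x k ≠ y k} | y k = i}) := Finset.sum_le_sum fun i _ => hdist i
    _ = 2 * Finset.card {k | x k ≠ y k} := by
      rw [Finset.sum_add_distrib, ← Finset.card_eq_sum_card_fiberwise (by simp),
        ← Finset.card_eq_sum_card_fiberwise (by simp), two_mul]

theorem exists_occupation_eq_two_mul_card_ne_le [Fintype κ] {S R : κ → ℕ}
    (hSR : ∑ i, S i = ∑ i, R i) :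
    ∃ (ι : Type) (_ : Fintype ι) (x y : ι → κ), occupation x = S ∧ occupation y = R ∧
      2 * Finset.card {k | x k ≠ y k} ≤ ∑ i, Nat.dist (S i) (R i) := by
  have excess_eq : ∑ i, (S i - R i) = ∑ i, (R i - S i) := by
    have h : ∑ i, (S i - R i + R i) = ∑ i, (R i - S i + S i) :=
      Finset.sum_congr rfl fun i _ => by omega
    simp only [Finset.sum_add_distrib] at h
    omega
  -- The dollars counted by `min (S i) (R i)` get the same owner in both labellings.
  obtain ⟨c, hc⟩ := exists_occupation_eq (ι := Fin (∑ i, min (S i) (R i)))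
    (fun i => min (S i) (R i)) (Fintype.card_fin _)
  obtain ⟨a, ha⟩ := exists_occupation_eq (ι := Fin (∑ i, (S i - R i)))
    (fun i => S i - R i) (Fintype.card_fin _)
  obtain ⟨b, hb⟩ := exists_occupation_eq (ι := Fin (∑ i, (S i - R i)))
    (fun i => R i - S i) (by rw [Fintype.card_fin, excess_eq])
  refine ⟨_, inferInstance, Sum.elim c a, Sum.elim c b, ?_, ?_, ?_⟩
  · ext i
    simp only [occupation_sumElim, hc, ha, Pi.add_apply]
    omega
  · ext i
    simp only [occupation_sumElim, hc, hb, Pi.add_apply]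
    omega
  · have hcard : Finset.card {k | Sum.elim c a k ≠ Sum.elim c b k} ≤ ∑ i, (S i - R i) := by
      refine (Finset.card_le_card (t := Finset.univ.map .inr) ?_).trans_eq (by simp)
      rintro (k | k) <;> simp
    simp only [Nat.dist, Finset.sum_add_distrib]
    omega

variable {N : ℕ} [DecidableEq ι]

theorem occupation_update (x : ι → κ) (k : ι) (b : κ) :
    occupation (Function.update x k b) + Pi.single (x k) 1 = occupation x + Pi.single b 1 := by
  ext i
  simp only [occupation, Finset.card_filter, Pi.add_apply, Pi.single_apply]
  rw [Fintype.sum_eq_add_sum_compl k,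
    Fintype.sum_eq_add_sum_compl k fun l => if x l = i then 1 else 0]
  have hrest : ∑ l ∈ {k}ᶜ, (if Function.update x k b l = i then 1 else 0) =
      ∑ l ∈ {k}ᶜ, if x l = i then 1 else 0 :=
    Finset.sum_congr rfl fun l hl => by
      rw [Function.update_of_ne (by simpa using hl)]
  rw [hrest, Function.update_self]
  simp only [eq_comm (a := i)]
  ring

theorem occupation_update_eq_moveDollar (x : ι → Fin N) {k : ι} {b : Fin N} (h : x k ≠ b) :
    occupation (Function.update x k b) = moveDollar (occupation x) b (x k) := by
  have hpos : 1 ≤ occupation x (x k) := Finset.card_pos.2 ⟨k, by simp⟩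
  exact ((moveDollar_eq_iff h.symm hpos).2 (occupation_update x k b).symm).symm

theorem forwardGenerator_single_occupation [NeZero N] (x : ι → Fin N) :
    forwardGenerator N (Pi.single (occupation x) 1) = ∑ k,
      ((1 / N : ℝ) • ∑ b, Pi.single (occupation (Function.update x k b)) 1
        - Pi.single (occupation x) 1) := by
  have hN : (N : ℝ) ≠ 0 := NeZero.ne _
  have hmove (k : ι) : (∑ b : Fin N, if x k ≠ b then (1 / N : ℝ) •
        (Pi.single (moveDollar (occupation x) b (x k)) 1 - Pi.single (occupation x) 1 :
          (Fin N → ℕ) → ℝ) else 0) =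
      ∑ b, (1 / N : ℝ) •
        (Pi.single (occupation (Function.update x k b)) 1 - Pi.single (occupation x) 1) := by
    refine Finset.sum_congr rfl fun b _ => ?_
    split_ifs with h
    · rw [occupation_update_eq_moveDollar x h]
    · rw [← not_not.1 h, Function.update_eq_self, sub_self, smul_zero]
  rw [forwardGenerator_single]
  refine (sum_comp_eq_sum_occupation_smul x _).symm.trans
    (Finset.sum_congr rfl fun k _ => (hmove k).trans ?_)
  simp only [← Finset.smul_sum, Finset.sum_sub_distrib, smul_sub, Finset.sum_const,
    Finset.card_univ, Fintype.card_fin, ← Nat.cast_smul_eq_nsmul ℝ, smul_smul,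
    one_div_mul_cancel hN, one_smul]

end Occupation

section ProductLaw

variable {ι α : Type*} [Fintype ι] [DecidableEq ι] [Fintype α]

theorem sum_prod_erase_mul_eq_sum_prod_mul_sum_update {K : Type*} [CommSemiring K] {w : α → K}
    (hw : ∑ a, w a = 1) (v : α → K) (k : ι) (h : (ι → α) → K) :
    ∑ ω : ι → α, (∏ l ∈ Finset.univ.erase k, w (ω l)) * v (ω k) * h ω =
      ∑ ω : ι → α, (∏ l, w (ω l)) * ∑ a, v a * h (Function.update ω k a) := by
  -- An independent copy of the coordinate `k` is appended, then exchanged with the original.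
  have swap_involutive : Function.Involutive fun p : (ι → α) × α =>
      (Function.update p.1 k p.2, p.1 k) := fun p => by simp
  calc ∑ ω : ι → α, (∏ l ∈ Finset.univ.erase k, w (ω l)) * v (ω k) * h ω
      = ∑ p : (ι → α) × α,
          w p.2 * ((∏ l ∈ Finset.univ.erase k, w (p.1 l)) * v (p.1 k) * h p.1) := by
        simp only [Fintype.sum_prod_type, ← Finset.sum_mul, hw, one_mul]
    _ = ∑ p : (ι → α) × α, (∏ l, w (p.1 l)) * (v p.2 * h (Function.update p.1 k p.2)) := by
        rw [← Equiv.sum_comp (swap_involutive.toPerm _)]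
        refine Finset.sum_congr rfl fun ⟨ω, a⟩ _ => ?_
        have hrest : ∏ l ∈ Finset.univ.erase k, w (Function.update ω k a l) =
            ∏ l ∈ Finset.univ.erase k, w (ω l) :=
          Finset.prod_congr rfl fun l hl => by
            rw [Function.update_of_ne (Finset.ne_of_mem_erase hl)]
        simp only [Function.Involutive.coe_toPerm, Function.update_self, hrest]
        rw [← Finset.mul_prod_erase _ _ (Finset.mem_univ k)]
        ring
    _ = ∑ ω : ι → α, (∏ l, w (ω l)) * ∑ a, v a * h (Function.update ω k a) := by
        simp only [Fintype.sum_prod_type, Finset.mul_sum]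

theorem hasDerivAt_sum_prod_mul {w : ℝ → α → ℝ} {c : α → ℝ} {t : ℝ} (hw : ∑ a, w t a = 1)
    (hderiv : ∀ a, HasDerivAt (w · a) (c a - w t a) t) (h : (ι → α) → ℝ) :
    HasDerivAt (fun s => ∑ ω : ι → α, (∏ k, w s (ω k)) * h ω)
      (∑ ω : ι → α, (∏ k, w t (ω k)) * ∑ k, (∑ a, c a * h (Function.update ω k a) - h ω)) t := by
  have hprod := HasDerivAt.fun_sum (u := Finset.univ) fun (ω : ι → α) _ =>
    (HasDerivAt.fun_finsetProd (u := Finset.univ) fun k _ => hderiv (ω k)).mul_const (h ω)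
  refine hprod.congr_deriv ?_
  simp only [Finset.sum_mul, Finset.mul_sum, smul_eq_mul]
  rw [Finset.sum_comm, Finset.sum_comm (s := Finset.univ (α := ι → α))]
  refine Finset.sum_congr rfl fun k _ => ?_
  simp only [mul_sub, sub_mul, Finset.sum_sub_distrib]
  rw [sum_prod_erase_mul_eq_sum_prod_mul_sum_update hw]
  refine congrArg _ (Finset.sum_congr rfl fun ω _ => ?_)
  rw [Finset.prod_erase_mul _ _ (Finset.mem_univ k)]

end ProductLaw

section RefreshLaw

variable {N : ℕ}

/-- The probability that at time `t` a dollar is in the state `a`, where `a.1` tells whether its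
exponential clock of rate one has rung and `a.2` is an independent uniformly chosen agent, the
owner of the dollar once the clock has rung. -/
def refreshWeight (N : ℕ) (t : ℝ) (a : Bool × Fin N) : ℝ :=
  (if a.1 then 1 - Real.exp (-t) else Real.exp (-t)) / N

theorem refreshWeight_nonneg {t : ℝ} (ht : 0 ≤ t) (a : Bool × Fin N) :
    0 ≤ refreshWeight N t a := by
  have hexp : Real.exp (-t) ≤ 1 := Real.exp_le_one_iff.2 (by linarith)
  unfold refreshWeight
  split_ifs
  · exact div_nonneg (by linarith) N.cast_nonneg
  · positivity

theorem sum_refreshWeight [NeZero N] (t : ℝ) : ∑ a, refreshWeight N t a = 1 := by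
  have hN : (N : ℝ) ≠ 0 := NeZero.ne _
  simp only [refreshWeight, Fintype.sum_prod_type, Fintype.sum_bool, Bool.false_eq_true, reduceIte,
    Finset.sum_const, Finset.card_univ, Fintype.card_fin, nsmul_eq_mul]
  field_simp
  ring

theorem hasDerivAt_refreshWeight (t : ℝ) (a : Bool × Fin N) :
    HasDerivAt (refreshWeight N · a)
      ((if a.1 then (1 / N : ℝ) else 0) - refreshWeight N t a) t := by
  have hexp : HasDerivAt (fun s : ℝ => Real.exp (-s)) (-Real.exp (-t)) t := by
    simpa using (hasDerivAt_neg t).exp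
  unfold refreshWeight
  split_ifs
  · exact ((hexp.const_sub 1).div_const _).congr_deriv (by ring)
  · exact (hexp.div_const _).congr_deriv (by ring)

/-- The law at time `t` of the state of one dollar, with point masses `refreshWeight N t`. -/
def refreshLaw (N : ℕ) (t : ℝ) : Measure (Bool × Fin N) :=
  ∑ a, ENNReal.ofReal (refreshWeight N t a) • Measure.dirac a

theorem refreshLaw_real_singleton {t : ℝ} (ht : 0 ≤ t) (a : Bool × Fin N) :
    (refreshLaw N t).real {a} = refreshWeight N t a := by
  simp [refreshLaw, measureReal_def, Measure.finsetSum_apply, Set.indicator_apply,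
    refreshWeight_nonneg ht]

theorem isProbabilityMeasure_refreshLaw [NeZero N] {t : ℝ} (ht : 0 ≤ t) :
    IsProbabilityMeasure (refreshLaw N t) := by
  constructor
  simp [refreshLaw, Measure.finsetSum_apply,
    ← ENNReal.ofReal_sum_of_nonneg fun a _ => refreshWeight_nonneg ht a, sum_refreshWeight]

theorem refreshLaw_not_refreshed [NeZero N] (t : ℝ) :
    refreshLaw N t {a | a.1 = false} = ENNReal.ofReal (Real.exp (-t)) := by
  have hN : (N : ℝ) ≠ 0 := NeZero.ne _
  calc refreshLaw N t {a | a.1 = false}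
      = ∑ _i : Fin N, ENNReal.ofReal (Real.exp (-t) / N) := by
        simp [refreshLaw, refreshWeight, Fintype.sum_prod_type]
    _ = ENNReal.ofReal (Real.exp (-t)) := by
        rw [← ENNReal.ofReal_sum_of_nonneg fun _ _ => by positivity, Finset.sum_const,
          Finset.card_univ, Fintype.card_fin, nsmul_eq_mul, mul_div_cancel₀ _ hN]

end RefreshLaw

section LabelledDynamics

variable {N : ℕ} {ι : Type*}

/-- The owners of the dollars when the dollar `k` starts at `x k` and is in the state `ω k` in the
sense of `refreshWeight`. -/
def position (x : ι → Fin N) (ω : ι → Bool × Fin N) (k : ι) : Fin N :=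
  if (ω k).1 then (ω k).2 else x k

theorem position_update [DecidableEq ι] (x : ι → Fin N) (ω : ι → Bool × Fin N) (k : ι)
    (b : Fin N) :
    position x (Function.update ω k (true, b)) = Function.update (position x ω) k b := by
  ext l
  rcases eq_or_ne l k with rfl | h
  · simp [position]
  · simp [position, h]

theorem position_ne_iff {x y : ι → Fin N} {ω : ι → Bool × Fin N} {k : ι} :
    position x ω k ≠ position y ω k ↔ x k ≠ y k ∧ (ω k).1 = false := by
  cases h : (ω k).1 <;> simp [position, h]

variable [Fintype ι]

/-- The law at time `t` of the configuration of the labelled system started from `x`. -/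
def configLaw (x : ι → Fin N) (t : ℝ) : Measure (Fin N → ℕ) :=
  (Measure.pi fun _ => refreshLaw N t).map fun ω => occupation (position x ω)

variable [NeZero N]

theorem isProbabilityMeasure_configLaw (x : ι → Fin N) {t : ℝ} (ht : 0 ≤ t) :
    IsProbabilityMeasure (configLaw x t) := by
  have := isProbabilityMeasure_refreshLaw (N := N) ht
  exact Measure.isProbabilityMeasure_map Measurable.of_discrete.aemeasurable

theorem configLaw_real_singleton [DecidableEq ι] (x : ι → Fin N) {t : ℝ} (ht : 0 ≤ t) :
    (fun T => (configLaw x t).real {T}) = ∑ ω : ι → Bool × Fin N,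
      (∏ k, refreshWeight N t (ω k)) • Pi.single (occupation (position x ω)) (1 : ℝ) := by
  have := isProbabilityMeasure_refreshLaw (N := N) ht
  ext T
  have hpre : (fun ω => occupation (position x ω)) ⁻¹' {T} =
      ((Finset.univ.filter fun ω => T = occupation (position x ω) : Finset (ι → Bool × Fin N)) :
        Set (ι → Bool × Fin N)) := by
    ext ω
    simp [eq_comm]
  rw [configLaw, map_measureReal_apply Measurable.of_discrete (measurableSet_singleton T), hpre,
    ← sum_measureReal_singleton, Finset.sum_filter]
  simp [measureReal_def, Pi.single_apply, ENNReal.toReal_prod, ← refreshLaw_real_singleton ht]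

theorem configLaw_zero (x : ι → Fin N) : configLaw x 0 = Measure.dirac (occupation x) := by
  have := isProbabilityMeasure_refreshLaw (N := N) le_rfl
  have hnot : ∀ᵐ a ∂refreshLaw N 0, a.1 = false :=
    (prob_compl_eq_zero_iff .of_discrete).2 (by simp [refreshLaw_not_refreshed])
  have hω : ∀ᵐ ω ∂Measure.pi fun _ : ι => refreshLaw N 0, ∀ k, (ω k).1 = false :=
    ae_all_iff.2 fun k =>
      (measurePreserving_eval (fun _ => refreshLaw N 0) k).quasiMeasurePreserving.ae hnot
  have hx : (fun ω => occupation (position x ω)) =ᵐ[Measure.pi fun _ : ι => refreshLaw N 0]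
      fun _ => occupation x := by
    filter_upwards [hω] with ω hω
    congr 1
    ext k
    simp [position, hω]
  rw [configLaw, Measure.map_congr hx, Measure.map_const, measure_univ, one_smul]

theorem hasDerivAt_sum_prod_refreshWeight [DecidableEq ι] (x : ι → Fin N) (t : ℝ)
    (T : Fin N → ℕ) :
    HasDerivAt
      (fun s => (∑ ω : ι → Bool × Fin N, (∏ k, refreshWeight N s (ω k)) •
        Pi.single (occupation (position x ω)) (1 : ℝ) : (Fin N → ℕ) → ℝ) T)
      (forwardGenerator N (∑ ω : ι → Bool × Fin N, (∏ k, refreshWeight N t (ω k)) •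
        Pi.single (occupation (position x ω)) 1) T) t := by
  have h := hasDerivAt_sum_prod_mul (sum_refreshWeight t) (hasDerivAt_refreshWeight t)
    fun ω : ι → Bool × Fin N =>
      (Pi.single (occupation (position x ω)) (1 : ℝ) : (Fin N → ℕ) → ℝ) T
  simp only [Finset.sum_apply, Pi.smul_apply, smul_eq_mul, map_sum, map_smul,
    forwardGenerator_single_occupation]
  refine h.congr_deriv ?_
  simp [Fintype.sum_prod_type, position_update, Finset.mul_sum]

theorem isMasterSolution_configLaw (x : ι → Fin N) : IsMasterSolution (configLaw x) := by
  classical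
  refine ⟨fun t ht => isProbabilityMeasure_configLaw x ht, fun T t ht => ?_⟩
  rw [masterRHS_eq_forwardGenerator, configLaw_real_singleton x ht]
  refine (hasDerivAt_sum_prod_refreshWeight x t T).hasDerivWithinAt.congr_of_mem (fun s hs => ?_) ht
  exact congrFun (configLaw_real_singleton x hs) T

end LabelledDynamics

section Wasserstein

theorem W1_map_map_le {Ω : Type*} [MeasurableSpace Ω] {d : ℕ} (ρ : Measure Ω)
    {X Y : Ω → Fin d → ℕ} (hX : Measurable X) (hY : Measurable Y) :
    W1 d (ρ.map X) (ρ.map Y) ≤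
      ∫⁻ ω, (∑ j, (Nat.dist (X ω j) (Y ω j) : ℝ≥0∞)) / d ∂ρ := by
  have hXY : Measurable fun ω => (X ω, Y ω) := hX.prodMk hY
  refine iInf₂_le_of_le (ρ.map fun ω => (X ω, Y ω)) (Measure.map_map measurable_fst hXY) ?_
  refine iInf_le_of_le (Measure.map_map measurable_snd hXY) ?_
  rw [lintegral_map Measurable.of_discrete hXY]

variable {N : ℕ} {ι : Type*} [Fintype ι]

theorem sum_dist_occupation_position_le (x y : ι → Fin N) (ω : ι → Bool × Fin N) :
    ∑ j, Nat.dist (occupation (position x ω) j) (occupation (position y ω) j) ≤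
      2 * ∑ k with x k ≠ y k, if (ω k).1 = false then 1 else 0 := by
  refine (sum_dist_occupation_le _ _).trans_eq ?_
  simp only [position_ne_iff, ← Finset.filter_filter, Finset.card_filter _ (Finset.filter _ _)]

variable [NeZero N] {t : ℝ}

theorem lintegral_pi_refreshLaw_not_refreshed (ht : 0 ≤ t) (k : ι) :
    ∫⁻ ω, (if (ω k).1 = false then 1 else 0) ∂(Measure.pi fun _ : ι => refreshLaw N t) =
      ENNReal.ofReal (Real.exp (-t)) := by
  have := isProbabilityMeasure_refreshLaw (N := N) ht
  rw [← refreshLaw_not_refreshed (N := N) t, ← lintegral_indicator_one .of_discrete,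
    ← (measurePreserving_eval (fun _ : ι => refreshLaw N t) k).lintegral_comp
      Measurable.of_discrete]
  simp [Set.indicator_apply]

theorem W1_configLaw_le (x y : ι → Fin N) (ht : 0 ≤ t) :
    W1 N (configLaw x t) (configLaw y t) ≤
      ENNReal.ofReal ((2 * Finset.card {k | x k ≠ y k} : ℕ) / N * Real.exp (-t)) := by
  let ρ : Measure (ι → Bool × Fin N) := Measure.pi fun _ => refreshLaw N t
  calc W1 N (configLaw x t) (configLaw y t)
      ≤ ∫⁻ ω, (∑ j, (Nat.dist (occupation (position x ω) j) (occupation (position y ω) j) :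
          ℝ≥0∞)) / N ∂ρ := W1_map_map_le ρ Measurable.of_discrete Measurable.of_discrete
    _ ≤ ∫⁻ ω, (2 * ∑ k with x k ≠ y k, if (ω k).1 = false then 1 else 0) / N ∂ρ := by
      refine lintegral_mono fun ω => ENNReal.div_le_div_right ?_ _
      exact_mod_cast sum_dist_occupation_position_le x y ω
    _ = (2 * ∑ k with x k ≠ y k, ENNReal.ofReal (Real.exp (-t))) / N := by
      simp only [div_eq_mul_inv]
      rw [lintegral_mul_const _ .of_discrete, lintegral_const_mul _ .of_discrete,
        lintegral_finsetSum _ fun _ _ => .of_discrete]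
      simp only [ρ, lintegral_pi_refreshLaw_not_refreshed ht]
    _ = ENNReal.ofReal ((2 * Finset.card {k | x k ≠ y k} : ℕ) / N * Real.exp (-t)) := by
      rw [ENNReal.ofReal_mul (by positivity),
        ENNReal.ofReal_div_of_pos (Nat.cast_pos.2 (NeZero.pos N)), ENNReal.ofReal_natCast,
        ENNReal.ofReal_natCast, Finset.sum_const, nsmul_eq_mul]
      push_cast
      simp only [div_eq_mul_inv]
      ring

end Wasserstein
section Contraction

variable {N : ℕ} [NeZero N] {S R : Fin N → ℕ}

theorem sum_dist_div_le {m : ℕ} (hS : ∑ i, S i = N * m) (hR : ∑ i, R i = N * m) :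
    ((∑ i, Nat.dist (S i) (R i) : ℕ) / N : ℝ) ≤ 2 * m := by
  have hle : ∑ i, Nat.dist (S i) (R i) ≤ ∑ i, S i + ∑ i, R i := by
    rw [← Finset.sum_add_distrib]
    exact Finset.sum_le_sum fun i _ => by unfold Nat.dist; omega
  rw [div_le_iff₀ (Nat.cast_pos.2 (NeZero.pos N))]
  exact_mod_cast hle.trans_eq (by rw [hS, hR]; ring)

theorem master_equation_contraction_general (hSR : ∑ i, S i = ∑ i, R i)
    {P Q : ℝ → Measure (Fin N → ℕ)} (hP : IsMasterSolution P) (hQ : IsMasterSolution Q)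
    (hP0 : P 0 = Measure.dirac S) (hQ0 : Q 0 = Measure.dirac R) {t : ℝ} (ht : 0 ≤ t) :
    W1 N (P t) (Q t) ≤
      ENNReal.ofReal ((∑ i, Nat.dist (S i) (R i) : ℕ) / N * Real.exp (-t)) := by
  obtain ⟨ι, _, x, y, hx, hy, hxy⟩ := exists_occupation_eq_two_mul_card_ne_le hSR
  rw [hP.eq_of_zero_eq (isMasterSolution_configLaw x) (by rw [hP0, configLaw_zero, hx]) ht,
    hQ.eq_of_zero_eq (isMasterSolution_configLaw y) (by rw [hQ0, configLaw_zero, hy]) ht]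
  refine (W1_configLaw_le x y ht).trans (ENNReal.ofReal_le_ofReal ?_)
  gcongr

end Contraction

/-- Contraction between two solutions of the poor-biased master equation started from
Dirac masses at configurations in `𝒜_{N,μ}`: `W₁(P_t, R_t) ≤ 2 μ e^{-t}`. -/
theorem master_equation_contraction (N μ : ℕ) (hN : 2 ≤ N) (hμ : 1 ≤ μ)
    (S R : Fin N → ℕ) (hS : ∑ i, S i = N * μ) (hR : ∑ i, R i = N * μ)
    (P Q : ℝ → Measure (Fin N → ℕ))
    (hP : IsMasterSolution P) (hQ : IsMasterSolution Q)
    (hP0 : P 0 = Measure.dirac S) (hQ0 : Q 0 = Measure.dirac R) :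
    ∀ t ∈ Set.Ici (0 : ℝ),
      W1 N (P t) (Q t) ≤ ENNReal.ofReal (2 * μ * Real.exp (-t)) := by
  intro t ht
  have : NeZero N := ⟨by omega⟩
  exact (master_equation_contraction_general (hS.trans hR.symm) hP hQ hP0 hQ0 ht).trans
    (ENNReal.ofReal_le_ofReal (by gcongr; exact sum_dist_div_le hS hR))

end
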